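/- Let F₂ be the free group on two generators a, b, and let H be the subgroup of F₂ generated by {b², bab⁻¹a⁻¹, a³}. Then the cogrowth series of H satisfies the rational identity (1 + z + z² − z³ − 5z⁴ − 13z⁵ − 16z⁶ − 20z⁷ − 12z⁸ − 12z⁹) · Σ_{n≥0} |H_n| zⁿ = 1 + z + 3z² + 3z³ + 5z⁴ + 5z⁵ + 6z⁶ + 6z⁷ + 4z⁸ + 4z⁹ in the ring of formal power series over the rationals. -/

import Mathlib

/-- `|H_n|`: the number of elements of the subgroup `H` of the free group `F₂`
whose reduced word length is `n`. -/
noncomputable def cogrowthCoeff (H : Subgroup (FreeGroup (Fin 2))) (n : ℕ) : ℕ :=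
  Nat.card {g : FreeGroup (Fin 2) // g ∈ H ∧ (FreeGroup.toWord g).length = n}

namespace CogrowthExample

open FreeGroup PowerSeries

/-- The transition function of the Stallings graph of `⟨b², bab⁻¹a⁻¹, a³⟩`, based at `0`. A letter
`(i, true)` is the `i`-th generator and `(i, false)` its inverse. -/
def step : Fin 5 → Fin 2 × Bool → Option (Fin 5)
  | 0, (0, true) => some 2
  | 0, (0, false) => some 3
  | 0, (1, _) => some 1
  | 1, (0, true) => some 4
  | 1, (1, _) => some 0
  | 2, (0, true) => some 3
  | 2, (0, false) => some 0
  | 2, (1, true) => some 4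
  | 3, (0, true) => some 0
  | 3, (0, false) => some 2
  | 4, (0, false) => some 1
  | 4, (1, false) => some 2
  | _, _ => none

/-- The vertex reached from `u` by reading a word in the Stallings graph, if there is one. -/
def run (u : Fin 5) (L : List (Fin 2 × Bool)) : Option (Fin 5) := L.foldlM step u

lemma run_nil (u : Fin 5) : run u [] = some u := rfl

lemma run_cons (u : Fin 5) (x : Fin 2 × Bool) (L : List (Fin 2 × Bool)) :
    run u (x :: L) = (step u x).bind fun v => run v L := rfl

lemma run_append (u : Fin 5) (L M : List (Fin 2 × Bool)) :
    run u (L ++ M) = (run u L).bind fun v => run v M := by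
  simp [run, List.foldlM_append]

lemma step_not_of_step {u v : Fin 5} {i : Fin 2} {b : Bool} (h : step u (i, b) = some v) :
    step v (i, !b) = some u := by
  revert u v i b
  decide

lemma run_invRev {u v : Fin 5} {L : List (Fin 2 × Bool)} (h : run u L = some v) :
    run v (invRev L) = some u := by
  induction L generalizing u with
  | nil => simpa [run_nil, eq_comm] using h
  | cons x L ih =>
    obtain ⟨w, hw, hL⟩ := Option.bind_eq_some_iff.1 ((run_cons u x L).symm.trans h)
    have hcons : invRev (x :: L) = invRev L ++ [(x.1, !x.2)] := by simp [invRev]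
    simp [hcons, run_append, ih hL, run_cons, run_nil, step_not_of_step hw]

lemma run_of_step {u v : Fin 5} {L M : List (Fin 2 × Bool)} (hLM : Red.Step L M)
    (h : run u L = some v) : run u M = some v := by
  obtain @⟨L₁, L₂, i, b⟩ := hLM
  obtain ⟨w, hw, h⟩ := Option.bind_eq_some_iff.1 ((run_append _ _ _).symm.trans h)
  obtain ⟨w', hw', h⟩ := Option.bind_eq_some_iff.1 ((run_cons _ _ _).symm.trans h)
  simpa [run_append, hw, run_cons, step_not_of_step hw'] using h

lemma run_of_red {u v : Fin 5} {L M : List (Fin 2 × Bool)} (hLM : Red L M)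
    (h : run u L = some v) : run u M = some v := by
  induction hLM with
  | refl => exact h
  | tail _ hstep ih => exact run_of_step hstep ih

/-- The generating set `{b², bab⁻¹a⁻¹, a³}`. -/
def generators : Set (FreeGroup (Fin 2)) :=
  {of 1 ^ 2, of 1 * of 0 * (of 1)⁻¹ * (of 0)⁻¹, of 0 ^ 3}

lemma run_toWord_of_mem {g : FreeGroup (Fin 2)} (hg : g ∈ Subgroup.closure generators) :
    run 0 g.toWord = some 0 := by
  induction hg using Subgroup.closure_induction with
  | mem g hg => rcases hg with rfl | rfl | rfl <;> decide
  | one => rfl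
  | mul g h _ _ hg hh =>
    rw [toWord_mul]
    exact run_of_red reduce.red (by simp [run_append, hg, hh])
  | inv g _ hg =>
    rw [toWord_inv]
    exact run_invRev hg

/-- The label of a path from `0` to the given vertex in a spanning tree of the Stallings graph. -/
def treeLabel : Fin 5 → FreeGroup (Fin 2) :=
  ![1, of 1, of 0, of 0 ^ 2, of 1 * of 0]

lemma treeLabel_mul_mem_of_step {u v : Fin 5} {x : Fin 2 × Bool} (h : step u x = some v) :
    treeLabel u * mk [x] * (treeLabel v)⁻¹ ∈ Subgroup.closure generators := by
  have hb : (of 1 ^ 2 : FreeGroup (Fin 2)) ∈ Subgroup.closure generators :=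
    Subgroup.subset_closure (by simp [generators])
  have hab : (of 1 * of 0 * (of 1)⁻¹ * (of 0)⁻¹ : FreeGroup (Fin 2)) ∈
      Subgroup.closure generators := Subgroup.subset_closure (by simp [generators])
  have ha : (of 0 ^ 3 : FreeGroup (Fin 2)) ∈ Subgroup.closure generators :=
    Subgroup.subset_closure (by simp [generators])
  have key : ∀ u v x, step u x = some v →
      treeLabel u * mk [x] * (treeLabel v)⁻¹ ∈
        ({1, of 1 ^ 2, (of 1 ^ 2)⁻¹, of 1 * of 0 * (of 1)⁻¹ * (of 0)⁻¹,
          (of 1 * of 0 * (of 1)⁻¹ * (of 0)⁻¹)⁻¹, of 0 ^ 3, (of 0 ^ 3)⁻¹} :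
          Finset (FreeGroup (Fin 2))) := by
    decide
  have hmem := key u v x h
  simp only [Finset.mem_insert, Finset.mem_singleton] at hmem
  rcases hmem with h | h | h | h | h | h | h <;> rw [h]
  · exact one_mem _
  · exact hb
  · exact inv_mem hb
  · exact hab
  · exact inv_mem hab
  · exact ha
  · exact inv_mem ha

lemma treeLabel_mul_mem_of_run {u v : Fin 5} {L : List (Fin 2 × Bool)} (h : run u L = some v) :
    treeLabel u * mk L * (treeLabel v)⁻¹ ∈ Subgroup.closure generators := by
  induction L generalizing u with
  | nil =>
    obtain rfl : u = v := by simpa [run_nil] using h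
    simp [← one_eq_mk]
  | cons x L ih =>
    obtain ⟨w, hw, hL⟩ := Option.bind_eq_some_iff.1 ((run_cons u x L).symm.trans h)
    have hmk : mk (x :: L) = mk [x] * mk L := by simp
    convert mul_mem (treeLabel_mul_mem_of_step hw) (ih hL) using 1
    rw [hmk]
    group

theorem mem_closure_generators_iff {g : FreeGroup (Fin 2)} :
    g ∈ Subgroup.closure generators ↔ run 0 g.toWord = some 0 := by
  refine ⟨run_toWord_of_mem, fun h => ?_⟩
  simpa [treeLabel, mk_toWord] using treeLabel_mul_mem_of_run h

/-- `x` may follow the optional letter `p` in a reduced word. -/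
abbrev CanFollow (p : Option (Fin 2 × Bool)) (x : Fin 2 × Bool) : Prop :=
  ∀ y ∈ p, y.1 = x.1 → y.2 = x.2

/-- The words of length `n` leading from `u` to `0` in the Stallings graph that are reduced, also
when preceded by the optional letter `p`. -/
def returnWords : ℕ → Option (Fin 2 × Bool) → Fin 5 → Finset (List (Fin 2 × Bool))
  | 0, _, u => if u = 0 then {[]} else ∅
  | n + 1, p, u => Finset.univ.biUnion fun x =>
      if CanFollow p x then
        (step u x).elim ∅ fun v =>
          (returnWords n (some x) v).map ⟨List.cons x, List.cons_injective⟩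
      else ∅

lemma isReduced_toList_append_cons {p : Option (Fin 2 × Bool)} {x : Fin 2 × Bool}
    {L : List (Fin 2 × Bool)} :
    IsReduced (p.toList ++ x :: L) ↔ CanFollow p x ∧ IsReduced (x :: L) := by
  cases p <;> simp [CanFollow, isReduced_cons_cons]

lemma mem_returnWords {n : ℕ} {p : Option (Fin 2 × Bool)} {u : Fin 5}
    {L : List (Fin 2 × Bool)} :
    L ∈ returnWords n p u ↔
      IsReduced (p.toList ++ L) ∧ run u L = some 0 ∧ L.length = n := by
  induction n generalizing p u L with
  | zero =>
    cases L with
    | nil => cases p <;> by_cases hu : u = 0 <;> simp [returnWords, run_nil, hu]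
    | cons x L => by_cases hu : u = 0 <;> simp [returnWords, hu]
  | succ n ih =>
    cases L with
    | nil =>
      simp only [returnWords, Finset.mem_biUnion, List.length_nil]
      refine iff_of_false ?_ (by simp)
      rintro ⟨x, -, hx⟩
      split_ifs at hx
      · cases h : step u x <;> simp [h] at hx
      · simp at hx
    | cons x L =>
      have hmem : x :: L ∈ returnWords (n + 1) p u ↔
          CanFollow p x ∧ ∃ v, step u x = some v ∧ L ∈ returnWords n (some x) v := by
        simp only [returnWords, Finset.mem_biUnion, Finset.mem_univ, true_and]
        constructor
        · rintro ⟨y, hy⟩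
          split_ifs at hy with hp
          · cases h : step u y with
            | none => simp [h] at hy
            | some v =>
              simp only [h, Option.elim_some, Finset.mem_map, Function.Embedding.coeFn_mk,
                List.cons.injEq] at hy
              obtain ⟨M, hM, rfl, rfl⟩ := hy
              exact ⟨hp, v, h, hM⟩
          · simp at hy
        · rintro ⟨hp, v, hv, hL⟩
          exact ⟨x, by rw [if_pos hp, hv]; simpa using hL⟩
      rw [hmem, isReduced_toList_append_cons, run_cons, Option.bind_eq_some_iff]
      simp only [ih, Option.toList_some, List.singleton_append, List.length_cons,
        Nat.add_right_cancel_iff]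
      grind

lemma card_returnWords_succ (n : ℕ) (p : Option (Fin 2 × Bool)) (u : Fin 5) :
    (returnWords (n + 1) p u).card = ∑ x, if CanFollow p x then
      (step u x).elim 0 fun v => (returnWords n (some x) v).card else 0 := by
  have head_eq : ∀ x, ∀ L ∈ (if CanFollow p x then (step u x).elim ∅ fun v =>
      (returnWords n (some x) v).map ⟨List.cons x, List.cons_injective⟩ else ∅),
      L.head? = some x := by
    intro x L hL
    split_ifs at hL
    · cases h : step u x with
      | none => simp [h] at hL
      | some v =>
        simp only [h, Option.elim_some, Finset.mem_map, Function.Embedding.coeFn_mk] at hL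
        obtain ⟨M, -, rfl⟩ := hL
        rfl
    · simp at hL
  rw [returnWords, Finset.card_biUnion]
  · refine Finset.sum_congr rfl fun x _ => ?_
    split_ifs
    · cases step u x <;> simp
    · rfl
  · intro x _ y _ hxy
    refine Finset.disjoint_left.2 fun L hx hy => hxy ?_
    exact Option.some_injective _ ((head_eq x L hx).symm.trans (head_eq y L hy))

theorem cogrowthCoeff_closure_generators (n : ℕ) :
    cogrowthCoeff (Subgroup.closure generators) n = (returnWords n none 0).card := by
  rw [cogrowthCoeff, ← Nat.card_eq_finsetCard]
  refine Nat.card_congr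
    { toFun := fun g => ⟨g.1.toWord, mem_returnWords.2
        ⟨isReduced_toWord, mem_closure_generators_iff.1 g.2.1, g.2.2⟩⟩
      invFun := fun L =>
        have h := mem_returnWords.1 L.2
        have hL : (mk L.1).toWord = L.1 := by
          rw [toWord_mk]; exact h.1.reduce_eq
        ⟨mk L.1, mem_closure_generators_iff.2 (by rw [hL]; exact h.2.1), by rw [hL]; exact h.2.2⟩
      left_inv := fun g => Subtype.ext mk_toWord
      right_inv := fun L => Subtype.ext (mem_returnWords.1 L.2).1.reduce_eq }

/-- The generating series of `returnWords · p u`. -/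
noncomputable def returnSeries (p : Option (Fin 2 × Bool)) (u : Fin 5) : ℚ⟦X⟧ :=
  PowerSeries.mk fun n => ((returnWords n p u).card : ℚ)

lemma returnSeries_eq (p : Option (Fin 2 × Bool)) (u : Fin 5) :
    returnSeries p u = (if u = 0 then 1 else 0) + X * ∑ x, if CanFollow p x then
      (step u x).elim 0 fun v => returnSeries (some x) v else 0 := by
  ext n
  cases n with
  | zero => by_cases hu : u = 0 <;> simp [returnSeries, returnWords, hu]
  | succ n =>
    have hconst : coeff (n + 1) (if u = 0 then 1 else 0 : ℚ⟦X⟧) = 0 := by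
      split_ifs <;> simp [coeff_one]
    rw [map_add, hconst, zero_add, coeff_succ_X_mul, map_sum, returnSeries, coeff_mk,
      card_returnWords_succ, Nat.cast_sum]
    refine Finset.sum_congr rfl fun x _ => ?_
    split_ifs
    · cases step u x <;> simp [returnSeries]
    · simp

lemma returnSeries_none_zero :
    (1 + X + X ^ 2 - X ^ 3 - 5 * X ^ 4 - 13 * X ^ 5 - 16 * X ^ 6 - 20 * X ^ 7
          - 12 * X ^ 8 - 12 * X ^ 9) * returnSeries none 0 =
      1 + X + 3 * X ^ 2 + 3 * X ^ 3 + 5 * X ^ 4 + 5 * X ^ 5 + 6 * X ^ 6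
        + 6 * X ^ 7 + 4 * X ^ 8 + 4 * X ^ 9 := by
  linear_combination (norm := skip)
    (1 + X + X ^ 2 - X ^ 3 - 5 * X ^ 4 - 13 * X ^ 5 - 16 * X ^ 6 - 20 * X ^ 7 - 12 * X ^ 8 - 12 * X ^ 9)
      * returnSeries_eq none 0
    + (X + X ^ 2 + 2 * X ^ 3 + 2 * X ^ 4 + 2 * X ^ 5 + X ^ 6)
      * returnSeries_eq (some (1, true)) 1
    + (X ^ 2 + X ^ 3 + 3 * X ^ 4 + 4 * X ^ 5 + 6 * X ^ 6 + 6 * X ^ 7 + 4 * X ^ 8 + 4 * X ^ 9)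
      * returnSeries_eq (some (1, false)) 0
    + (X ^ 2 + X ^ 3 + 3 * X ^ 4 + 4 * X ^ 5 + 6 * X ^ 6 + 6 * X ^ 7 + 4 * X ^ 8 + 4 * X ^ 9)
      * returnSeries_eq (some (1, true)) 0
    + (X + X ^ 2 + 2 * X ^ 3 + 2 * X ^ 4 + 2 * X ^ 5 + X ^ 6)
      * returnSeries_eq (some (1, false)) 1
    + (X + X ^ 2 + 3 * X ^ 3 + 2 * X ^ 4 + 2 * X ^ 5 - 2 * X ^ 8)
      * returnSeries_eq (some (0, true)) 2
    + (X ^ 3 + 3 * X ^ 4 + 5 * X ^ 5 + 6 * X ^ 6 + 8 * X ^ 7 + 4 * X ^ 8 + 4 * X ^ 9)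
      * returnSeries_eq (some (0, false)) 0
    + (X ^ 2 + X ^ 3 + 5 * X ^ 4 + 4 * X ^ 5 + 6 * X ^ 6 + 4 * X ^ 7 + 4 * X ^ 8)
      * returnSeries_eq (some (0, true)) 3
    + (X ^ 2 + X ^ 3 + 3 * X ^ 4 + 2 * X ^ 5 + 4 * X ^ 6 + 2 * X ^ 8)
      * returnSeries_eq (some (0, false)) 2
    + (X ^ 3 + X ^ 4 + 5 * X ^ 5 + 4 * X ^ 6 + 6 * X ^ 7 + 4 * X ^ 8 + 4 * X ^ 9)
      * returnSeries_eq (some (0, true)) 0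
    + (X + X ^ 2 + 3 * X ^ 3 + 2 * X ^ 4 + 4 * X ^ 5 + 2 * X ^ 7)
      * returnSeries_eq (some (0, false)) 3
    + (2 * X ^ 2 + 2 * X ^ 3 + 4 * X ^ 4 + 4 * X ^ 5 + 4 * X ^ 6 + 2 * X ^ 7)
      * returnSeries_eq (some (0, true)) 4
    + (X ^ 3 + 2 * X ^ 4 + 4 * X ^ 5 + 5 * X ^ 6 + 4 * X ^ 7 + 4 * X ^ 8)
      * returnSeries_eq (some (0, false)) 1
    + (X ^ 2 + 2 * X ^ 3 + 4 * X ^ 4 + 5 * X ^ 5 + 4 * X ^ 6 + 4 * X ^ 7)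
      * returnSeries_eq (some (1, true)) 4
    + (2 * X ^ 3 + 2 * X ^ 4 + 4 * X ^ 5 + 4 * X ^ 6 + 4 * X ^ 7 + 2 * X ^ 8)
      * returnSeries_eq (some (1, false)) 2
  simp [CanFollow, step, Fintype.sum_prod_type]
  ring

end CogrowthExample

/-- For the subgroup `H = ⟨b², bab⁻¹a⁻¹, a³⟩` of `F₂` (with `a = of 0`, `b = of 1`),
the cogrowth series satisfies
`(1 + z + z² − z³ − 5z⁴ − 13z⁵ − 16z⁶ − 20z⁷ − 12z⁸ − 12z⁹)·H(z)
  = 1 + z + 3z² + 3z³ + 5z⁴ + 5z⁵ + 6z⁶ + 6z⁷ + 4z⁸ + 4z⁹` in `ℚ⟦z⟧`. -/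
theorem example_cogrowth_identity_F2 (H : Subgroup (FreeGroup (Fin 2)))
    (hH : H = Subgroup.closure
      {FreeGroup.of 1 ^ 2,
        FreeGroup.of 1 * FreeGroup.of 0 * (FreeGroup.of 1)⁻¹ * (FreeGroup.of 0)⁻¹,
        FreeGroup.of 0 ^ 3}) :
    (1 + PowerSeries.X + PowerSeries.X ^ 2 - PowerSeries.X ^ 3 - 5 * PowerSeries.X ^ 4
          - 13 * PowerSeries.X ^ 5 - 16 * PowerSeries.X ^ 6 - 20 * PowerSeries.X ^ 7
          - 12 * PowerSeries.X ^ 8 - 12 * PowerSeries.X ^ 9) *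
        PowerSeries.mk (fun n => (cogrowthCoeff H n : ℚ)) =
      1 + PowerSeries.X + 3 * PowerSeries.X ^ 2 + 3 * PowerSeries.X ^ 3
        + 5 * PowerSeries.X ^ 4 + 5 * PowerSeries.X ^ 5 + 6 * PowerSeries.X ^ 6
        + 6 * PowerSeries.X ^ 7 + 4 * PowerSeries.X ^ 8 + 4 * PowerSeries.X ^ 9 := by
  subst hH
  have h := CogrowthExample.returnSeries_none_zero
  simp only [CogrowthExample.returnSeries,
    ← CogrowthExample.cogrowthCoeff_closure_generators] at h
  exact h
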